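/- arXiv:1002.2808 — 2 statements merged into one kernel-verified Lean document; each statement's English description precedes it below -/
import Mathlib

section
/- For real a, real c ≠ 0, and b > 0, as t → ∞ one has ∫_0^b e^{it(a + c x²)} dx = A₀ · e^{iat}/(2(|c|t)^{1/2}) − (i/(2 b c t)) e^{i(a + c b²)t} + O(1/(b³ (ct)²)), where A₀ = e^{(πi/4)·sgn(c)} √π. -/
open Filter Asymptotics

/-- Antiderivative used for the tail of the Gaussian integral. -/
lemma tail_hasDerivAt (β : ℂ) (hβ : β ≠ 0) (x : ℝ) (hx : x ≠ 0) :
    HasDerivAt (fun x : ℝ => Complex.exp (-β * (x:ℂ) ^ 2) *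
        (-(1 / (2 * β)) * (x:ℂ)⁻¹ + 1 / (4 * β ^ 2) * ((x:ℂ) ^ 3)⁻¹))
      (Complex.exp (-β * (x:ℂ) ^ 2) -
        Complex.exp (-β * (x:ℂ) ^ 2) * (3 / (4 * β ^ 2) * ((x:ℂ) ^ 4)⁻¹)) x := by
  have hx' : (x:ℂ) ≠ 0 := by exact_mod_cast hx
  have h0 : HasDerivAt (fun z : ℂ => z) 1 (x:ℂ) := hasDerivAt_id _
  have h1 := ((h0.pow 2).const_mul (-β)).cexp
  have h2 := (h0.inv hx').const_mul (-(1 / (2 * β)))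
  have h3 := ((h0.pow 3).inv (pow_ne_zero 3 hx')).const_mul (1 / (4 * β ^ 2))
  have h := (h1.mul (h2.add h3)).comp_ofReal
  refine HasDerivAt.congr_deriv (f := fun x : ℝ => Complex.exp (-β * (x:ℂ) ^ 2) *
        (-(1 / (2 * β)) * (x:ℂ)⁻¹ + 1 / (4 * β ^ 2) * ((x:ℂ) ^ 3)⁻¹)) h ?_
  simp only [Pi.add_apply, Pi.inv_apply, Pi.pow_apply]
  push_cast
  field_simp
  ring

lemma norm_gauss_le (β : ℂ) (hβ : 0 < β.re) (x : ℝ) : ‖Complex.exp (-β * (x:ℂ) ^ 2)‖ ≤ 1 := by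
  rw [Complex.norm_exp]
  apply Real.exp_le_one_iff.2
  have : (-β * (x:ℂ) ^ 2).re = -(β.re * x ^ 2) := by
    rw [← Complex.ofReal_pow, Complex.re_mul_ofReal]; simp
  rw [this]
  have := mul_nonneg hβ.le (sq_nonneg x)
  linarith

lemma tail_tendsto (β : ℂ) (hβ : 0 < β.re) :
    Tendsto (fun x : ℝ => Complex.exp (-β * (x:ℂ) ^ 2) *
        (-(1 / (2 * β)) * (x:ℂ)⁻¹ + 1 / (4 * β ^ 2) * ((x:ℂ) ^ 3)⁻¹)) atTop (nhds 0) := by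
  have hi : Tendsto (fun x : ℝ => (x:ℂ)⁻¹) atTop (nhds 0) := by
    have := (Complex.continuous_ofReal.tendsto 0).comp tendsto_inv_atTop_zero
    simpa [Function.comp_def] using this
  have h := (hi.const_mul (-(1 / (2 * β)))).add ((hi.pow 3).const_mul (1 / (4 * β ^ 2)))
  have h' := h.norm
  simp only [mul_zero, ne_eq, OfNat.ofNat_ne_zero, not_false_eq_true, zero_pow, add_zero,
    norm_zero] at h'
  refine squeeze_zero_norm (fun x => ?_) h'
  rw [norm_mul, inv_pow]
  exact mul_le_of_le_one_left (norm_nonneg _) (norm_gauss_le β hβ x)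

lemma main_bound (β : ℂ) (hβ : 0 < β.re) (b : ℝ) (hb : 0 < b) :
    ‖(∫ x in (0:ℝ)..b, Complex.exp (-β * (x:ℂ) ^ 2)) - ((Real.pi / β : ℂ) ^ (1 / 2 : ℂ) / 2 -
      1 / (2 * β * b) * Complex.exp (-β * (b:ℂ) ^ 2))‖ ≤ 1 / (2 * ‖β‖ ^ 2 * b ^ 3) := by
  have hβ0 : β ≠ 0 := by rintro rfl; simp at hβ
  have hint : MeasureTheory.Integrable (fun x : ℝ => Complex.exp (-β * (x:ℂ) ^ 2)) :=
    integrable_cexp_neg_mul_sq hβ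
  have hpow : MeasureTheory.IntegrableOn (fun x : ℝ => 3 / (4 * ‖β‖ ^ 2) * x ^ (-4:ℝ))
      (Set.Ioi b) := (integrableOn_Ioi_rpow_of_lt (by norm_num) hb).const_mul _
  have hle : ∀ᵐ x : ℝ ∂(MeasureTheory.volume.restrict (Set.Ioi b)),
      ‖Complex.exp (-β * (x:ℂ) ^ 2) * (3 / (4 * β ^ 2) * ((x:ℂ) ^ 4)⁻¹)‖ ≤
        3 / (4 * ‖β‖ ^ 2) * x ^ (-4:ℝ) := by
    refine (MeasureTheory.ae_restrict_iff' measurableSet_Ioi).2 (Eventually.of_forall ?_)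
    intro x hx
    have hx0 : 0 < x := hb.trans hx
    rw [norm_mul]
    refine (mul_le_of_le_one_left (norm_nonneg _) (norm_gauss_le β hβ x)).trans (le_of_eq ?_)
    rw [Real.rpow_neg hx0.le]
    have : x ^ (4:ℝ) = x ^ 4 := by exact_mod_cast Real.rpow_natCast x 4
    rw [this]
    simp [abs_of_pos hx0]
  have hint2 : MeasureTheory.IntegrableOn (fun x : ℝ =>
      Complex.exp (-β * (x:ℂ) ^ 2) * (3 / (4 * β ^ 2) * ((x:ℂ) ^ 4)⁻¹)) (Set.Ioi b) := by
    refine MeasureTheory.Integrable.mono' hpow ?_ hle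
    exact Measurable.aestronglyMeasurable (by fun_prop)
  have hR := MeasureTheory.norm_integral_le_of_norm_le hpow hle
  rw [MeasureTheory.integral_const_mul, integral_Ioi_rpow_of_lt (by norm_num) hb] at hR
  have hb3 : b ^ ((-4:ℝ) + 1) = (b ^ 3)⁻¹ := by
    rw [show (-4:ℝ) + 1 = -(3:ℕ) by norm_num, Real.rpow_neg hb.le, Real.rpow_natCast]
  rw [hb3] at hR
  have hftc := MeasureTheory.integral_Ioi_of_hasDerivAt_of_tendsto' (a := b)
    (fun x hx => tail_hasDerivAt β hβ0 x (hb.trans_le hx).ne')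
    (hint.integrableOn.sub hint2) (tail_tendsto β hβ)
  rw [MeasureTheory.integral_sub hint.integrableOn hint2] at hftc
  have hsplit := intervalIntegral.integral_interval_add_Ioi
    (hint.integrableOn (s := Set.Ioi (0:ℝ))) (hint.integrableOn (s := Set.Ioi b))
  rw [integral_gaussian_complex_Ioi hβ] at hsplit
  set R := ∫ x in Set.Ioi b, Complex.exp (-β * (x:ℂ) ^ 2) * (3 / (4 * β ^ 2) * ((x:ℂ) ^ 4)⁻¹)
  have hb' : (b:ℂ) ≠ 0 := by exact_mod_cast hb.ne'
  have key : (∫ x in (0:ℝ)..b, Complex.exp (-β * (x:ℂ) ^ 2)) -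
      ((Real.pi / β : ℂ) ^ (1 / 2 : ℂ) / 2 -
      1 / (2 * β * b) * Complex.exp (-β * (b:ℂ) ^ 2)) =
      Complex.exp (-β * (b:ℂ) ^ 2) * (1 / (4 * β ^ 2) * ((b:ℂ) ^ 3)⁻¹) - R := by
    have e1 : 1 / (2 * β * b) = 1 / (2 * β) * (b:ℂ)⁻¹ := by field_simp
    rw [e1]
    linear_combination hsplit - hftc
  rw [key]
  refine (norm_sub_le _ _).trans ?_
  have h1 : ‖Complex.exp (-β * (b:ℂ) ^ 2) * (1 / (4 * β ^ 2) * ((b:ℂ) ^ 3)⁻¹)‖ ≤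
      1 / (4 * ‖β‖ ^ 2) * (b ^ 3)⁻¹ := by
    rw [norm_mul]
    refine (mul_le_of_le_one_left (norm_nonneg _) (norm_gauss_le β hβ b)).trans (le_of_eq ?_)
    simp [abs_of_pos hb]
  refine (add_le_add h1 hR).trans (le_of_eq ?_)
  have : ‖β‖ ≠ 0 := norm_ne_zero_iff.2 hβ0
  field_simp
  norm_num

lemma boundary_bound (s : ℝ) (hs : s ≠ 0) (b : ℝ) (hb : 0 < b) :
    ‖(∫ x in (0:ℝ)..b, Complex.exp (-(-Complex.I * s) * (x:ℂ) ^ 2)) -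
      ((Real.pi / (-Complex.I * s) : ℂ) ^ (1 / 2 : ℂ) / 2 -
      1 / (2 * (-Complex.I * s) * b) * Complex.exp (-(-Complex.I * s) * (b:ℂ) ^ 2))‖
      ≤ 1 / (2 * ‖(-Complex.I * s : ℂ)‖ ^ 2 * b ^ 3) := by
  have hs' : (s:ℂ) ≠ 0 := by exact_mod_cast hs
  set β₀ : ℂ := -Complex.I * s with hβ₀
  have hne : β₀ ≠ 0 := by simp [hβ₀, hs]
  have hb' : (b:ℂ) ≠ 0 := by exact_mod_cast hb.ne'
  have hu : Tendsto (fun ε : ℝ => (ε:ℂ) + β₀) (nhdsWithin 0 (Set.Ioi 0)) (nhds β₀) := by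
    have : Tendsto (fun ε : ℝ => (ε:ℂ) + β₀) (nhds 0) (nhds ((0:ℝ) + β₀)) :=
      Continuous.tendsto (by fun_prop) 0
    simpa using this.mono_left nhdsWithin_le_nhds
  have hslit : (Real.pi / β₀ : ℂ) ∈ Complex.slitPlane := by
    right
    have : (Real.pi / β₀ : ℂ) = ((Real.pi / s : ℝ) : ℂ) * Complex.I := by
      rw [hβ₀]; push_cast; field_simp; simp
    rw [this]
    simp [hs, Real.pi_ne_zero]
  have hc1 : ContinuousAt (fun β : ℂ => ∫ x in (0:ℝ)..b, Complex.exp (-β * (x:ℂ) ^ 2)) β₀ :=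
    (intervalIntegral.continuous_parametric_intervalIntegral_of_continuous'
      (by fun_prop) 0 b).continuousAt
  have hc2 : ContinuousAt (fun β : ℂ => (Real.pi / β : ℂ) ^ (1 / 2 : ℂ)) β₀ :=
    (continuousAt_const.div continuousAt_id hne).cpow continuousAt_const hslit
  have hc3 : ContinuousAt (fun β : ℂ => 1 / (2 * β * b) * Complex.exp (-β * (b:ℂ) ^ 2)) β₀ :=
    (continuousAt_const.div (by fun_prop) (by simp [hne, hb.ne'])).mul (by fun_prop)
  have hc4 : ContinuousAt (fun β : ℂ => 1 / (2 * ‖β‖ ^ 2 * b ^ 3)) β₀ :=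
    continuousAt_const.div (by fun_prop) (by simp [hne, hb.ne'])
  have hL := (hc1.sub ((hc2.div_const 2).sub hc3)).norm
  refine le_of_tendsto_of_tendsto (hL.tendsto.comp hu) (hc4.tendsto.comp hu) ?_
  filter_upwards [self_mem_nhdsWithin] with ε hε
  have : 0 < ((ε:ℂ) + β₀).re := by simpa [hβ₀] using hε
  exact main_bound _ this b hb

lemma sqrt_value (c t : ℝ) (hc : c ≠ 0) (ht : 0 < t) :
    (Real.pi / (-Complex.I * (c * t : ℝ)) : ℂ) ^ (1 / 2 : ℂ) =
      Complex.exp (Real.pi * Complex.I / 4 * (Real.sign c : ℝ)) * (Real.sqrt Real.pi : ℂ) /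
        (Real.sqrt (|c| * t) : ℂ) := by
  have hct : 0 < |c| * t := mul_pos (abs_pos.2 hc) ht
  have hr : 0 < Real.pi / (|c| * t) := div_pos Real.pi_pos hct
  have ht' : (t:ℂ) ≠ 0 := by exact_mod_cast ht.ne'
  have hc' : (c:ℂ) ≠ 0 := by exact_mod_cast hc
  have hlog : (Real.pi / (-Complex.I * (c * t : ℝ)) : ℂ) =
      Complex.exp ((Real.log (Real.pi / (|c| * t)) : ℝ) +
        ((Real.sign c * (Real.pi / 2) : ℝ) : ℂ) * Complex.I) := by
    rw [Complex.exp_add, ← Complex.ofReal_exp, Real.exp_log hr]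
    rcases lt_or_gt_of_ne hc with h | h
    · rw [Real.sign_of_neg h, abs_of_neg h]
      have : Complex.exp (((-1 * (Real.pi / 2) : ℝ) : ℂ) * Complex.I) = -Complex.I := by
        push_cast
        rw [show (-1 * ((Real.pi:ℂ) / 2)) * Complex.I = -((Real.pi:ℂ) / 2 * Complex.I) by ring,
          Complex.exp_neg, Complex.exp_pi_div_two_mul_I]
        simp
      rw [this]; push_cast; field_simp; simp
    · rw [Real.sign_of_pos h, abs_of_pos h]
      have : Complex.exp (((1 * (Real.pi / 2) : ℝ) : ℂ) * Complex.I) = Complex.I := by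
        push_cast
        rw [one_mul, Complex.exp_pi_div_two_mul_I]
      rw [this]; push_cast; field_simp; simp
  have hpi := Real.pi_pos
  have hsg : |Real.sign c| = 1 := by
    rcases lt_or_gt_of_ne hc with h | h
    · rw [Real.sign_of_neg h]; simp
    · rw [Real.sign_of_pos h]; simp
  have hsg' := abs_le.1 hsg.le
  rw [hlog, Complex.cpow_def_of_ne_zero (Complex.exp_ne_zero _), Complex.log_exp]
  · have hsq : Real.exp (Real.log (Real.pi / (|c| * t)) * (1 / 2)) =
        Real.sqrt Real.pi / Real.sqrt (|c| * t) := by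
      rw [← Real.sqrt_div hpi.le, Real.sqrt_eq_rpow, Real.rpow_def_of_pos hr]
    rw [add_mul, Complex.exp_add]
    have : Complex.exp ((Real.log (Real.pi / (|c| * t)) : ℝ) * (1 / 2 : ℂ)) =
        (Real.sqrt Real.pi : ℂ) / (Real.sqrt (|c| * t) : ℂ) := by
      rw [← Complex.ofReal_div, ← hsq]; push_cast; rfl
    rw [this]
    have e : ((Real.sign c * (Real.pi / 2) : ℝ) : ℂ) * Complex.I * (1 / 2) =
        Real.pi * Complex.I / 4 * (Real.sign c : ℝ) := by push_cast; ring
    rw [e]; ring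
  · simp; nlinarith
  · simp; nlinarith

theorem quadratic_phase_integral_asymptotic (a c b : ℝ) (hc : c ≠ 0) (hb : 0 < b) :
    (fun t : ℝ =>
      (∫ x in (0:ℝ)..b, Complex.exp (Complex.I * t * (a + c * x ^ 2))) -
        ((Complex.exp (Real.pi * Complex.I / 4 * (Real.sign c : ℝ)) * (Real.sqrt Real.pi : ℂ)) *
            Complex.exp (Complex.I * a * t) / (2 * (Real.sqrt (|c| * t) : ℂ)) -
          Complex.I / (2 * b * c * t) * Complex.exp (Complex.I * (a + c * b ^ 2) * t)))
      =O[atTop] (fun t : ℝ => 1 / (b ^ 3 * (c * t) ^ 2)) := by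
  refine IsBigO.of_bound (1 / 2) ?_
  filter_upwards [eventually_gt_atTop 0] with t ht
  have hct : c * t ≠ 0 := mul_ne_zero hc ht.ne'
  have hB := boundary_bound (c * t) hct b hb
  rw [sqrt_value c t hc ht] at hB
  have ht' : (t:ℂ) ≠ 0 := by exact_mod_cast ht.ne'
  have hc' : (c:ℂ) ≠ 0 := by exact_mod_cast hc
  have hb' : (b:ℂ) ≠ 0 := by exact_mod_cast hb.ne'
  have hI : (∫ x in (0:ℝ)..b, Complex.exp (Complex.I * t * (a + c * x ^ 2))) =
      Complex.exp (Complex.I * a * t) *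
        ∫ x in (0:ℝ)..b, Complex.exp (-(-Complex.I * (c * t : ℝ)) * (x:ℂ) ^ 2) := by
    rw [← intervalIntegral.integral_const_mul]
    congr 1
    ext x
    rw [← Complex.exp_add]
    congr 1
    push_cast
    ring
  have hE : Complex.exp (Complex.I * (a + c * b ^ 2) * t) = Complex.exp (Complex.I * a * t) *
      Complex.exp (-(-Complex.I * (c * t : ℝ)) * (b:ℂ) ^ 2) := by
    rw [← Complex.exp_add]
    congr 1
    push_cast
    ring
  have hf : 1 / (2 * (-Complex.I * (c * t : ℝ)) * b) = Complex.I / (2 * b * c * t) := by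
    push_cast
    field_simp
    simp
  have hn : ‖Complex.exp (Complex.I * a * t)‖ = 1 := by
    rw [show Complex.I * a * t = ((a * t : ℝ) : ℂ) * Complex.I by push_cast; ring]
    exact Complex.norm_exp_ofReal_mul_I _
  rw [hf] at hB
  rw [hI, hE]
  refine le_trans (le_of_eq ?_) (hB.trans (le_of_eq ?_))
  · rw [← one_mul (‖(∫ x in (0:ℝ)..b, Complex.exp (-(-Complex.I * (c * t : ℝ)) * (x:ℂ) ^ 2)) - _‖),
      ← hn, ← norm_mul]
    congr 1
    ring
  · have h2 : ‖(-Complex.I * (c * t : ℝ) : ℂ)‖ ^ 2 = (c * t) ^ 2 := by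
      rw [norm_mul, norm_neg, Complex.norm_I, one_mul, Complex.norm_real, Real.norm_eq_abs, sq_abs]
    rw [h2, Real.norm_of_nonneg (by positivity)]
    field_simp
end

section
/- The improper integral ∫_0^∞ u^{−1/2} e^{i u σ} du equals e^{(πi/4)σ} √π for σ = ±1. -/
open Filter

lemma fresnel_aux_norm (σ : ℝ) (hσ : σ = 1 ∨ σ = -1) (s : ℝ) :
    ((1 + s ^ 2) / 2 ≤ ‖(s : ℂ) ^ 2 - Complex.I * σ‖) := by
  have h2 : σ ^ 2 = 1 := by rcases hσ with h | h <;> simp [h]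
  have h : ‖(s : ℂ) ^ 2 - Complex.I * σ‖ ^ 2 = s ^ 4 + 1 := by
    rw [Complex.sq_norm, Complex.normSq_apply]
    simp [pow_two]
    nlinarith
  refine le_of_sq_le_sq ?_ (norm_nonneg _)
  rw [h]
  nlinarith [sq_nonneg (s ^ 2 - 1), sq_nonneg (s ^ 2)]

lemma fresnel_aux_ne (σ : ℝ) (hσ : σ = 1 ∨ σ = -1) (s : ℝ) :
    (s : ℂ) ^ 2 - Complex.I * σ ≠ 0 := by
  have := fresnel_aux_norm σ hσ s
  intro h
  rw [h, norm_zero] at this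
  nlinarith [sq_nonneg s]

lemma fresnel_aux_bound (σ : ℝ) (hσ : σ = 1 ∨ σ = -1) (s : ℝ) :
    ‖((s : ℂ) ^ 2 - Complex.I * σ)⁻¹‖ ≤ 2 * (1 + s ^ 2)⁻¹ := by
  rw [norm_inv]
  have h := fresnel_aux_norm σ hσ s
  have h3 : 0 < (1 + s ^ 2) / 2 := by positivity
  calc _ ≤ ((1 + s ^ 2) / 2)⁻¹ := inv_anti₀ h3 h
    _ = _ := by field_simp

lemma fresnel_aux_integrable (σ : ℝ) (hσ : σ = 1 ∨ σ = -1) :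
    MeasureTheory.Integrable (fun s : ℝ => ((s : ℂ) ^ 2 - Complex.I * σ)⁻¹) := by
  refine (integrable_inv_one_add_sq.const_mul 2).mono' ?_ (MeasureTheory.ae_of_all _ (fresnel_aux_bound σ hσ))
  refine Continuous.aestronglyMeasurable ?_
  exact Continuous.inv₀ (by fun_prop) (fresnel_aux_ne σ hσ)

lemma fresnel_aux_b (σ : ℝ) (hσ : σ = 1 ∨ σ = -1) :
    ∃ b : ℂ, b = Complex.exp (Real.pi * Complex.I / 4 * (σ : ℂ)) ∧ b ^ 2 = Complex.I * σ ∧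
      b.im ≠ 0 ∧ Complex.log (-b) - Complex.log b = - (Real.pi * Complex.I * σ) := by
  refine ⟨_, rfl, ?_, ?_, ?_⟩
  · rw [← Complex.exp_nat_mul]
    rcases hσ with h | h
    · rw [h, show ((2 : ℕ) : ℂ) * (Real.pi * Complex.I / 4 * ((1 : ℝ) : ℂ))
        = Real.pi / 2 * Complex.I by push_cast; ring, Complex.exp_pi_div_two_mul_I]
      simp
    · rw [h, show ((2 : ℕ) : ℂ) * (Real.pi * Complex.I / 4 * ((-1 : ℝ) : ℂ))
        = -Real.pi / 2 * Complex.I by push_cast; ring, Complex.exp_neg_pi_div_two_mul_I]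
      simp
  · rw [Complex.exp_im]
    have e : (Real.pi * Complex.I / 4 * (σ : ℂ)).im = Real.pi / 4 * σ := by
      rw [show (Real.pi * Complex.I / 4 * (σ : ℂ)) = ((Real.pi / 4 * σ : ℝ) : ℂ) * Complex.I by
        push_cast; ring]
      rw [Complex.im_ofReal_mul, Complex.I_im, mul_one]
    rw [e]
    refine mul_ne_zero (Real.exp_ne_zero _) ?_
    rcases hσ with h | h <;> simp [h]
  · have e : -Complex.exp (Real.pi * Complex.I / 4 * (σ : ℂ))
        = Complex.exp (((-(3 * Real.pi / 4) * σ : ℝ) : ℂ) * Complex.I) := by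
      rcases hσ with h | h
      · rw [← Complex.exp_sub_pi_mul_I]
        congr 1; rw [h]; push_cast; ring
      · rw [← Complex.exp_add_pi_mul_I]
        congr 1; rw [h]; push_cast; ring
    have e2 : (Real.pi * Complex.I / 4 * (σ : ℂ)) = ((Real.pi / 4 * σ : ℝ) : ℂ) * Complex.I := by
        push_cast; ring
    rw [e, e2, Complex.log_exp, Complex.log_exp]
    · push_cast; ring
    all_goals
      simp only [Complex.im_ofReal_mul, Complex.I_im]
      rcases hσ with h | h <;> rw [h] <;> linarith [Real.pi_pos]

lemma fresnel_aux_log (b : ℂ) :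
    Tendsto (fun s : ℝ => Complex.log (s - b) - Complex.log (s + b)) atTop (nhds 0) := by
  have key : ∀ c : ℂ, Tendsto (fun s : ℝ => (1 : ℂ) + c / s) atTop (nhds 1) := by
    intro c
    have : Tendsto (fun s : ℝ => ((s⁻¹ : ℝ) : ℂ)) atTop (nhds ((0 : ℝ) : ℂ)) :=
      (Complex.continuous_ofReal.tendsto 0).comp tendsto_inv_atTop_zero
    have h := (this.const_mul c).const_add 1
    simpa [div_eq_mul_inv] using h
  have kl : ∀ c : ℂ, Tendsto (fun s : ℝ => Complex.log ((1 : ℂ) + c / s)) atTop (nhds 0) := by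
    intro c
    have := (key c).clog (by simp)
    simpa using this
  have h := (kl (-b)).sub (kl b)
  rw [sub_zero] at h
  refine h.congr' ?_
  filter_upwards [eventually_gt_atTop 0, (key b).eventually_ne one_ne_zero,
    (key (-b)).eventually_ne one_ne_zero] with s hs h1 h2
  have hs' : (s : ℂ) ≠ 0 := by exact_mod_cast hs.ne'
  rw [show (s : ℂ) - b = s * (1 + -b / s) by field_simp; ring,
    show (s : ℂ) + b = s * (1 + b / s) by field_simp, Complex.log_ofReal_mul hs h2,
    Complex.log_ofReal_mul hs h1]
  ring

lemma fresnel_aux_integral (σ : ℝ) (hσ : σ = 1 ∨ σ = -1) :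
    ∫ s in Set.Ioi (0 : ℝ), ((s : ℂ) ^ 2 - Complex.I * σ)⁻¹ =
      Real.pi / 2 * Complex.exp (Real.pi * Complex.I / 4 * (σ : ℂ)) := by
  obtain ⟨b, hb, hb2, him, hlog⟩ := fresnel_aux_b σ hσ
  rw [← hb]
  have hb0 : b ≠ 0 := by rintro rfl; simp at him
  have hd : ∀ s : ℝ, HasDerivAt
      (fun s : ℝ => (2 * b)⁻¹ * (Complex.log (s - b) - Complex.log (s + b)))
      (((s : ℂ) ^ 2 - Complex.I * σ)⁻¹) s := by
    intro s
    have m1 : (s : ℂ) - b ∈ Complex.slitPlane := by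
      right; simpa using him
    have m2 : (s : ℂ) + b ∈ Complex.slitPlane := by
      right; simpa using him
    have d0 : HasDerivAt (fun s : ℝ => (s : ℂ)) 1 s := Complex.ofRealCLM.hasDerivAt
    have := (((d0.sub_const b).clog_real m1).sub ((d0.add_const b).clog_real m2)).const_mul
      (2 * b)⁻¹
    refine this.congr_deriv ?_
    have n1 := Complex.slitPlane_ne_zero m1
    have n2 := Complex.slitPlane_ne_zero m2
    rw [← hb2, show (s : ℂ) ^ 2 - b ^ 2 = (s - b) * (s + b) by ring]
    field_simp
    ring
  rw [MeasureTheory.integral_Ioi_of_hasDerivAt_of_tendsto' (fun s _ => hd s)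
    (fresnel_aux_integrable σ hσ).integrableOn ((fresnel_aux_log b).const_mul _)]
  simp only [Complex.ofReal_zero, zero_sub, zero_add, mul_zero]
  rw [hlog]
  field_simp
  rw [hb2]

lemma fresnel_aux_gauss (u : ℝ) (hu : 0 < u) :
    (1 / (Real.sqrt u : ℂ)) = (2 / Real.sqrt Real.pi : ℂ) *
      ∫ s in Set.Ioi (0 : ℝ), ((Real.exp (-u * s ^ 2) : ℝ) : ℂ) := by
  rw [integral_complex_ofReal, integral_gaussian_Ioi, Real.sqrt_div Real.pi_pos.le]
  have h1 : (Real.sqrt u : ℂ) ≠ 0 := by exact_mod_cast (Real.sqrt_pos.2 hu).ne'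
  have h2 : (Real.sqrt Real.pi : ℂ) ≠ 0 := by exact_mod_cast (Real.sqrt_pos.2 Real.pi_pos).ne'
  push_cast
  field_simp

lemma fresnel_aux_prod (σ R : ℝ) (hR : 0 < R) :
    MeasureTheory.Integrable (Function.uncurry fun (u s : ℝ) =>
      ((Real.exp (-u * s ^ 2) : ℝ) : ℂ) * Complex.exp (Complex.I * u * σ))
      ((MeasureTheory.volume.restrict (Set.Ioc 0 R)).prod
        (MeasureTheory.volume.restrict (Set.Ioi 0))) := by
  have hn : ∀ u s : ℝ, ‖((Real.exp (-u * s ^ 2) : ℝ) : ℂ) * Complex.exp (Complex.I * u * σ)‖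
      = Real.exp (-u * s ^ 2) := by
    intro u s
    rw [norm_mul, show Complex.I * u * σ = ((u * σ : ℝ) : ℂ) * Complex.I by push_cast; ring,
      Complex.norm_exp_ofReal_mul_I, Complex.norm_real, Real.norm_eq_abs, Real.abs_exp, mul_one]
  rw [MeasureTheory.integrable_prod_iff]
  · constructor
    · filter_upwards [MeasureTheory.ae_restrict_mem measurableSet_Ioc] with u hu
      have hi : MeasureTheory.Integrable (fun s : ℝ => ((Real.exp (-u * s ^ 2) : ℝ) : ℂ))
          (MeasureTheory.volume.restrict (Set.Ioi 0)) :=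
        (integrable_exp_neg_mul_sq hu.1).restrict.ofReal
      exact hi.mul_const (Complex.exp (Complex.I * u * σ))
    · simp only [Function.uncurry, hn, integral_gaussian_Ioi]
      have h : IntervalIntegrable (fun u : ℝ => u ^ (-(1/2) : ℝ)) MeasureTheory.volume 0 R :=
        intervalIntegral.intervalIntegrable_rpow' (by norm_num)
      rw [intervalIntegrable_iff_integrableOn_Ioc_of_le hR.le] at h
      refine MeasureTheory.Integrable.congr (h.const_mul (Real.sqrt Real.pi / 2)) ?_
      filter_upwards [MeasureTheory.ae_restrict_mem measurableSet_Ioc] with u hu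
      rw [Real.sqrt_div Real.pi_pos.le, Real.rpow_neg hu.1.le, ← Real.sqrt_eq_rpow]
      ring
  · refine Continuous.aestronglyMeasurable ?_
    simp only [Function.uncurry_def]
    fun_prop

lemma fresnel_aux_swap (σ : ℝ) (hσ : σ = 1 ∨ σ = -1) (R : ℝ) (hR : 0 < R) :
    ∫ u in (0:ℝ)..R, (1 / (Real.sqrt u : ℂ)) * Complex.exp (Complex.I * u * σ) =
      (2 / Real.sqrt Real.pi : ℂ) * ∫ s in Set.Ioi (0 : ℝ),
        (1 - Complex.exp (-((s : ℂ) ^ 2 - Complex.I * σ) * R)) *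
          ((s : ℂ) ^ 2 - Complex.I * σ)⁻¹ := by
  rw [intervalIntegral.integral_of_le hR.le]
  have h1 : ∫ u in Set.Ioc 0 R, (1 / (Real.sqrt u : ℂ)) * Complex.exp (Complex.I * u * σ) =
      ∫ u in Set.Ioc 0 R, (2 / Real.sqrt Real.pi : ℂ) * ∫ s in Set.Ioi (0 : ℝ),
        ((Real.exp (-u * s ^ 2) : ℝ) : ℂ) * Complex.exp (Complex.I * u * σ) := by
    refine MeasureTheory.setIntegral_congr_fun measurableSet_Ioc fun u hu => ?_
    rw [fresnel_aux_gauss u hu.1, MeasureTheory.integral_mul_const, mul_assoc]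
  rw [h1, MeasureTheory.integral_const_mul,
    MeasureTheory.integral_integral_swap (fresnel_aux_prod σ R hR)]
  congr 1
  refine MeasureTheory.integral_congr_ae (MeasureTheory.ae_of_all _ fun s => ?_)
  beta_reduce
  have hne := fresnel_aux_ne σ hσ s
  have h2 : ∀ u : ℝ, ((Real.exp (-u * s ^ 2) : ℝ) : ℂ) * Complex.exp (Complex.I * u * σ) =
      Complex.exp (-((s : ℂ) ^ 2 - Complex.I * σ) * u) := by
    intro u
    rw [Complex.ofReal_exp, ← Complex.exp_add]
    congr 1
    push_cast
    ring
  simp only [h2]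
  rw [← intervalIntegral.integral_of_le hR.le, integral_exp_mul_complex (neg_ne_zero.2 hne)]
  simp only [Complex.ofReal_zero, mul_zero, Complex.exp_zero]
  rw [div_neg, div_eq_mul_inv]
  ring

lemma fresnel_aux_expnorm (σ s R : ℝ) :
    ‖Complex.exp (-((s : ℂ) ^ 2 - Complex.I * σ) * R)‖ = Real.exp (-(s ^ 2 * R)) := by
  rw [Complex.norm_exp]
  congr 1
  simp [pow_two]

theorem improper_fresnel_integral (σ : ℝ) (hσ : σ = 1 ∨ σ = -1) :
    Tendsto (fun R : ℝ => ∫ u in (0:ℝ)..R, (1 / (Real.sqrt u : ℂ)) * Complex.exp (Complex.I * u * σ))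
      atTop
      (nhds (Complex.exp (Real.pi * Complex.I / 4 * (σ : ℂ)) * (Real.sqrt Real.pi : ℂ))) := by
  have hlim : Tendsto (fun R : ℝ => ∫ s in Set.Ioi (0 : ℝ),
        (1 - Complex.exp (-((s : ℂ) ^ 2 - Complex.I * σ) * R)) *
          ((s : ℂ) ^ 2 - Complex.I * σ)⁻¹) atTop
      (nhds (∫ s in Set.Ioi (0 : ℝ), ((s : ℂ) ^ 2 - Complex.I * σ)⁻¹)) := by
    refine MeasureTheory.tendsto_integral_filter_of_dominated_convergence
      (fun s => 2 * (2 * (1 + s ^ 2)⁻¹)) ?_ ?_ ?_ ?_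
    · refine Eventually.of_forall fun R => Continuous.aestronglyMeasurable ?_
      exact Continuous.mul (by fun_prop)
        (Continuous.inv₀ (by fun_prop) (fresnel_aux_ne σ hσ))
    · filter_upwards [eventually_ge_atTop 0] with R hR
      refine MeasureTheory.ae_of_all _ fun s => ?_
      rw [norm_mul]
      refine mul_le_mul ?_ (fresnel_aux_bound σ hσ s) (norm_nonneg _) (by norm_num)
      refine (norm_sub_le _ _).trans ?_
      rw [fresnel_aux_expnorm, norm_one]
      have : Real.exp (-(s ^ 2 * R)) ≤ 1 := Real.exp_le_one_iff.2 (by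
        have : 0 ≤ s ^ 2 * R := by positivity
        linarith)
      linarith
    · exact ((integrable_inv_one_add_sq.const_mul 2).const_mul 2).integrableOn
    · filter_upwards [MeasureTheory.ae_restrict_mem measurableSet_Ioi] with s hs
      have hs : 0 < s := hs
      have h0 : Tendsto (fun R : ℝ => Complex.exp (-((s : ℂ) ^ 2 - Complex.I * σ) * R)) atTop
          (nhds 0) := by
        rw [tendsto_zero_iff_norm_tendsto_zero]
        simp only [fresnel_aux_expnorm]
        exact Real.tendsto_exp_neg_atTop_nhds_zero.comp
          (tendsto_id.const_mul_atTop (by positivity : 0 < s ^ 2))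
      have := (h0.const_sub 1).mul_const (((s : ℂ) ^ 2 - Complex.I * σ)⁻¹)
      simpa using this
  have h := hlim.const_mul (2 / Real.sqrt Real.pi : ℂ)
  rw [fresnel_aux_integral σ hσ] at h
  have h2 : (Real.sqrt Real.pi : ℂ) ≠ 0 := by exact_mod_cast (Real.sqrt_pos.2 Real.pi_pos).ne'
  have h3 : (Real.sqrt Real.pi : ℂ) ^ 2 = Real.pi := by
    exact_mod_cast Real.sq_sqrt Real.pi_pos.le
  have e : (2 / Real.sqrt Real.pi : ℂ) *
      (Real.pi / 2 * Complex.exp (Real.pi * Complex.I / 4 * (σ : ℂ))) =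
      Complex.exp (Real.pi * Complex.I / 4 * (σ : ℂ)) * (Real.sqrt Real.pi : ℂ) := by
    generalize Complex.exp (Real.pi * Complex.I / 4 * (σ : ℂ)) = E
    rw [← h3]
    field_simp
  rw [e] at h
  refine h.congr' ?_
  filter_upwards [eventually_gt_atTop 0] with R hR
  exact (fresnel_aux_swap σ hσ R hR).symm
end
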